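/- Let (X, →, *, 1) be a quantum-Wajsberg algebra. The following are equivalent: (a) X is ∨-commutative, i.e., x∨y = y∨x for all x, y ∈ X; (b) x→y = (y∨x)→y and x ≤_Q x∨y, for all x, y ∈ X. -/

import Mathlib

/-!
Under `∨`-commutativity both identities in (b) are direct computations with (BE4) and
contraposition. For the converse, the axiom (QW) with `y = 0` gives `x* ≤_Q x → z`, hence
`b ≤_Q a → b`, and from this `x ≤_Q z` implies `z ∨ x = z` (`sup_eq_of_leQ`). The two parts of (b)
then give `y ∨ x = (y → x) → x = ((x ∨ y) → x) → x = (x ∨ y) ∨ x = x ∨ y`.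
-/

/-- A bounded involutive BE algebra. -/
class InvBE (X : Type*) where
  imp : X → X → X
  one : X
  zero : X
  be1 : ∀ x : X, imp x x = one
  be2 : ∀ x : X, imp x one = one
  be3 : ∀ x : X, imp one x = x
  be4 : ∀ x y z : X, imp x (imp y z) = imp y (imp x z)
  bound : ∀ x : X, imp zero x = one
  dn : ∀ x : X, imp (imp x zero) zero = x

namespace InvBE

variable {X : Type*} [InvBE X]

/-- Negation: `x* = x → 0`. -/
def neg (x : X) : X := imp x zero

/-- `x ∨ y = (x → y) → y`. -/
def sup (x y : X) : X := imp (imp x y) y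

/-- `x ∧ y = ((x* → y*) → y*)*`. -/
def inf (x y : X) : X := neg (imp (imp (neg x) (neg y)) (neg y))

/-- `x ≤ y` iff `x → y = 1`. -/
def le (x y : X) : Prop := imp x y = one

/-- `x ≤_Q y` iff `x = x ∧ y`. -/
def leQ (x y : X) : Prop := x = inf x y

end InvBE

namespace InvBE

variable {X : Type*} [InvBE X]

theorem neg_neg' (x : X) : neg (neg x) = x := dn x

theorem imp_neg_swap (x y : X) : imp x (neg y) = imp y (neg x) := be4 x y zero

theorem contrapose_imp (x y : X) : imp (neg y) (neg x) = imp x y := by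
  rw [imp_neg_swap, neg_neg']

theorem neg_zero' : neg (zero : X) = one := be1 zero

theorem zero_inf (x : X) : inf zero x = zero := by
  unfold inf
  rw [neg_zero', be3, be1, ← neg_zero', neg_neg']

theorem inf_zero (x : X) : inf x zero = zero := by
  unfold inf
  rw [neg_zero', be2, ← neg_zero', neg_neg']

/-- The instance `y = 0` of (QW). -/
theorem neg_leQ_imp
    (qw : ∀ x y z : X, imp x (inf (inf x y) (inf z x)) = inf (imp x y) (imp x z)) (x z : X) :
    leQ (neg x) (imp x z) := by
  have h := qw x zero z
  rwa [inf_zero, zero_inf] at h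

theorem leQ_imp
    (qw : ∀ x y z : X, imp x (inf (inf x y) (inf z x)) = inf (imp x y) (imp x z)) (a b : X) :
    leQ b (imp a b) := by
  have h := neg_leQ_imp qw (neg b) (neg a)
  rwa [neg_neg', contrapose_imp] at h

/-- With `c = z → x = x* → z*`, the hypothesis says `x* = c → z*`, and `z* ≤_Q c` says
`(c → z*) → c* = z`; together these give `c → x = x* → c* = z`. -/
theorem sup_eq_of_leQ
    (qw : ∀ x y z : X, imp x (inf (inf x y) (inf z x)) = inf (imp x y) (imp x z)) {x z : X}
    (h : leQ x z) : sup z x = z := by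
  have h1 : neg x = imp (imp z x) (neg z) := by
    have h' := congrArg neg h
    rwa [inf, neg_neg', contrapose_imp] at h'
  have h2 : z = imp (imp (imp z x) (neg z)) (neg (imp z x)) := by
    have h' := congrArg neg (leQ_imp qw (neg x) (neg z))
    rwa [contrapose_imp, inf, neg_neg', neg_neg', imp_neg_swap z] at h'
  rw [← h1, contrapose_imp] at h2
  exact h2.symm

end InvBE

open InvBE in
theorem stmt_12 {X : Type*} [InvBE X]
    (qw : ∀ x y z : X, imp x (inf (inf x y) (inf z x)) = inf (imp x y) (imp x z)) :
    (∀ x y : X, sup x y = sup y x) ↔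
    (∀ x y : X, imp x y = imp (sup y x) y ∧ leQ x (sup x y)) := by
  constructor
  · intro comm x y
    constructor
    · have h : sup (imp x y) y = imp x y := by
        rw [comm, sup, be4 y x y, be1, be2, be3]
      rw [comm y x]
      exact h.symm
    · have h : inf x (sup x y) = neg (sup (neg x) (neg (sup x y))) := rfl
      have hle : imp x (sup x y) = one := by rw [sup, be4, be1]
      rw [leQ, h, comm, sup, contrapose_imp, hle, be3, neg_neg']
  · intro h x y
    have h1 : sup y x = sup (sup x y) x := congrArg (fun t => imp t x) (h y x).1
    rw [h1, sup_eq_of_leQ qw (h x y).2]
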